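/- arXiv:1803.09306 — 2 statements merged into one kernel-verified Lean document; each statement's English description precedes it below -/
import Mathlib

section
/- Let f be an arbitrary polynomial of degree s ≥ 2 in d ≥ 2 variables with rational coefficients such that the set {x ∈ ℚ^d : f(x) = 1} is finite, and let ξ = (ξ₁,…,ξ_d) ∈ ℝ^d be totally irrational with f(ξ) = 1. Then the uniform Diophantine exponent of ξ satisfies ω̂(ξ) ≤ H_{d−1,s}, where H_{d−1,s} is the unique positive root of the equation 1 − x = x · Σ_{k=1}^{d−1} (x/(s−1))^k. -/
open Filter

/-- The "uniform approximation at exponent `γ`" property: for every sufficiently large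
real `Q`, the system `max_j |q θ_j - a_j| < Q^(-γ)`, `1 ≤ q ≤ Q` has an integer solution.
The uniform Diophantine exponent `ω̂(θ)` is the supremum of such `γ`. -/
def UnifApprox {m : ℕ} (θ : Fin m → ℝ) (γ : ℝ) : Prop :=
  ∀ᶠ Q : ℝ in atTop, ∃ (q : ℤ) (a : Fin m → ℤ),
    1 ≤ q ∧ (q : ℝ) ≤ Q ∧ ∀ j, |(q : ℝ) * θ j - (a j : ℝ)| < Q ^ (-γ)

/-- `1, θ₁, …, θ_m` are linearly independent over `ℚ`. -/
def TotallyIrrational {m : ℕ} (θ : Fin m → ℝ) : Prop :=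
  LinearIndependent ℚ (Fin.cons (1 : ℝ) θ)


namespace UE
open Matrix

section matrices
variable {α β γ : Type*} [Fintype α] [Fintype β] [Fintype γ]
  [DecidableEq α] [DecidableEq β] [DecidableEq γ]

lemma one_le_det_one_add {Q : Matrix α α ℝ} (hQ : Q.PosSemidef) : 1 ≤ (1 + Q).det := by
  have hs := hQ.1.spectral_theorem
  set U := hQ.1.eigenvectorUnitary
  have h1 : 1 + Q = (U : Matrix α α ℝ) * (diagonal (fun i => 1 + hQ.1.eigenvalues i)) *
      (star U : Matrix α α ℝ) := by
    have : diagonal (fun i => 1 + hQ.1.eigenvalues i) =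
        1 + diagonal (hQ.1.eigenvalues) := by
      rw [← diagonal_one, diagonal_add]
    rw [this, mul_add, add_mul, mul_one]
    conv_lhs => rw [hs]
    simp [Unitary.conjStarAlgAut_apply]
  have h2 : (U : Matrix α α ℝ) * (star U : Matrix α α ℝ) = 1 := Unitary.coe_mul_star_self U
  rw [h1, det_mul_right_comm, h2, one_mul, det_diagonal]
  calc (1:ℝ) = ∏ i : α, 1 := by simp
    _ ≤ _ := Finset.prod_le_prod (by simp) (fun i _ => by linarith [hQ.eigenvalues_nonneg i])

lemma exists_sq {A : Matrix α α ℝ} (hA : A.PosSemidef) : ∃ B : Matrix α α ℝ, A = Bᴴ * B := by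
  open scoped MatrixOrder ComplexOrder in
  have := (CStarAlgebra.nonneg_iff_eq_star_mul_self (a := A)).1 hA.nonneg
  exact this

lemma det_le_det_add {A P : Matrix α α ℝ} (hA : A.PosDef) (hP : P.PosSemidef) :
    A.det ≤ (A + P).det := by
  obtain ⟨B, hB⟩ := UE.exists_sq hA.posSemidef
  have hdA := hA.det_pos
  have hdB : IsUnit B.det := by
    rw [isUnit_iff_ne_zero]
    intro h
    rw [hB, det_mul, h] at hdA
    simp at hdA
  have hQ : ((B⁻¹)ᴴ * P * B⁻¹).PosSemidef := hP.conjTranspose_mul_mul_same _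
  have e1 : Bᴴ * (B⁻¹)ᴴ = 1 := by
    rw [← conjTranspose_mul, nonsing_inv_mul _ hdB, conjTranspose_one]
  have h2 : A + P = Bᴴ * (1 + (B⁻¹)ᴴ * P * B⁻¹) * B := by
    rw [mul_add, add_mul, mul_one, ← hB]
    congr 1
    calc P = (Bᴴ * (B⁻¹)ᴴ) * P * (B⁻¹ * B) := by rw [e1, nonsing_inv_mul _ hdB]; simp
      _ = _ := by simp only [Matrix.mul_assoc]
  have h3 : (A + P).det = A.det * (1 + (B⁻¹)ᴴ * P * B⁻¹).det := by
    rw [h2, hB]; simp only [det_mul]; ring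
  rw [h3]
  nlinarith [one_le_det_one_add hQ]

/-- The Fischer inequality. -/
lemma fischer {S : Matrix (β ⊕ γ) (β ⊕ γ) ℝ} (hS : S.PosDef) :
    S.det ≤ (S.submatrix Sum.inl Sum.inl).det * (S.submatrix Sum.inr Sum.inr).det := by
  set A := S.submatrix Sum.inl Sum.inl with hAdef
  set D := S.submatrix Sum.inr Sum.inr with hDdef
  set B := S.submatrix Sum.inl Sum.inr with hBdef
  have hA : A.PosDef := hS.submatrix Sum.inl_injective
  have hSe : S = fromBlocks A B Bᴴ D := by
    ext i j
    rcases i with i | i <;> rcases j with j | j <;> simp [A, B, D]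
    have := hS.1.apply (Sum.inr i) (Sum.inl j)
    simpa using this.symm
  have : Invertible A := hA.isUnit.invertible
  have hdet : S.det = A.det * (D - Bᴴ * A⁻¹ * B).det := by
    rw [hSe, det_fromBlocks₁₁, invOf_eq_nonsing_inv]
  have hX : (D - Bᴴ * A⁻¹ * B).PosSemidef := by
    rw [← PosDef.fromBlocks₁₁ B D hA, ← hSe]; exact hS.posSemidef
  have hXd : (D - Bᴴ * A⁻¹ * B).PosDef := by
    rw [hX.posDef_iff_det_ne_zero]
    intro h
    have := hS.det_pos
    rw [hdet, h] at this
    simp at this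
  have hP : (Bᴴ * A⁻¹ * B).PosSemidef := hA.inv.posSemidef.conjTranspose_mul_mul_same _
  have := det_le_det_add hXd hP
  rw [sub_add_cancel] at this
  rw [hdet]
  exact mul_le_mul_of_nonneg_left this hA.det_pos.le

lemma koteljanskii {M : Matrix (α ⊕ (β ⊕ γ)) (α ⊕ (β ⊕ γ)) ℝ} (hM : M.PosDef) :
    M.det * (M.submatrix Sum.inl Sum.inl).det ≤
      (M.submatrix (Sum.map id Sum.inl) (Sum.map id Sum.inl) :
        Matrix (α ⊕ β) (α ⊕ β) ℝ).det *
      (M.submatrix (Sum.map id Sum.inr) (Sum.map id Sum.inr) :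
        Matrix (α ⊕ γ) (α ⊕ γ) ℝ).det := by
  set A := M.submatrix Sum.inl Sum.inl with hAdef
  set D := M.submatrix Sum.inr Sum.inr with hDdef
  set B := M.submatrix Sum.inl Sum.inr with hBdef
  have hA : A.PosDef := hM.submatrix Sum.inl_injective
  have hBs : ∀ i j, M (Sum.inr i) (Sum.inl j) = M (Sum.inl j) (Sum.inr i) := fun i j => by
    simpa using (hM.1.apply (Sum.inr i) (Sum.inl j)).symm
  have hMe : M = fromBlocks A B Bᴴ D := by
    ext i j
    rcases i with i | i <;> rcases j with j | j <;> simp [A, B, D, hBs]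
  have : Invertible A := hA.isUnit.invertible
  set S := D - Bᴴ * A⁻¹ * B with hSdef
  have hdet : M.det = A.det * S.det := by
    rw [hMe, det_fromBlocks₁₁, invOf_eq_nonsing_inv]
  have hX : S.PosSemidef := by
    rw [hSdef, ← PosDef.fromBlocks₁₁ B D hA, ← hMe]; exact hM.posSemidef
  have hXd : S.PosDef := by
    rw [hX.posDef_iff_det_ne_zero]
    intro h
    have := hM.det_pos
    rw [hdet, h] at this
    simp at this
  have h1 : (M.submatrix (Sum.map id Sum.inl) (Sum.map id Sum.inl) :
        Matrix (α ⊕ β) (α ⊕ β) ℝ).det = A.det * (S.submatrix Sum.inl Sum.inl).det := by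
    have : (M.submatrix (Sum.map id Sum.inl) (Sum.map id Sum.inl) :
        Matrix (α ⊕ β) (α ⊕ β) ℝ) = fromBlocks A (B.submatrix id Sum.inl)
          (B.submatrix id Sum.inl)ᴴ (D.submatrix Sum.inl Sum.inl) := by
      ext i j
      rcases i with i | i <;> rcases j with j | j <;> simp [A, B, D, hBs]
    rw [this, det_fromBlocks₁₁, invOf_eq_nonsing_inv]
    rfl
  have h2 : (M.submatrix (Sum.map id Sum.inr) (Sum.map id Sum.inr) :
        Matrix (α ⊕ γ) (α ⊕ γ) ℝ).det = A.det * (S.submatrix Sum.inr Sum.inr).det := by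
    have : (M.submatrix (Sum.map id Sum.inr) (Sum.map id Sum.inr) :
        Matrix (α ⊕ γ) (α ⊕ γ) ℝ) = fromBlocks A (B.submatrix id Sum.inr)
          (B.submatrix id Sum.inr)ᴴ (D.submatrix Sum.inr Sum.inr) := by
      ext i j
      rcases i with i | i <;> rcases j with j | j <;> simp [A, B, D, hBs]
    rw [this, det_fromBlocks₁₁, invOf_eq_nonsing_inv]
    rfl
  rw [hdet, h1, h2]
  have := fischer hXd
  have hp := hA.det_pos
  have h3 := mul_le_mul_of_nonneg_left this (mul_nonneg hp.le hp.le)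
  linarith

end matrices

end UE


namespace UE
open Matrix

section gram
variable {N : ℕ} {α β γ ι : Type*} [Fintype α] [Fintype β] [Fintype γ] [Fintype ι]
  [DecidableEq α] [DecidableEq β] [DecidableEq γ] [DecidableEq ι]

/-- Gram determinant of a family of integer vectors. -/
noncomputable def gdet (v : ι → Fin N → ℤ) : ℤ := (Matrix.of v * (Matrix.of v)ᵀ).det

/-- The real Gram matrix. -/
noncomputable def gR (v : ι → Fin N → ℤ) : Matrix ι ι ℝ :=
  (Matrix.of v * (Matrix.of v)ᵀ).map (Int.cast : ℤ → ℝ)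

lemma gdet_cast (v : ι → Fin N → ℤ) : ((gdet v : ℤ) : ℝ) = (gR v).det := by
  unfold gdet gR
  exact RingHom.map_det (Int.castRingHom ℝ) _

lemma gR_psd (v : ι → Fin N → ℤ) : (gR v).PosSemidef := by
  have : gR v = ((Matrix.of v).map (Int.cast : ℤ → ℝ)) *
      ((Matrix.of v).map (Int.cast : ℤ → ℝ))ᴴ := by
    ext i j
    simp [gR, Matrix.mul_apply]
  rw [this]
  exact posSemidef_self_mul_conjTranspose _

lemma gdet_nonneg (v : ι → Fin N → ℤ) : 0 ≤ gdet v := by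
  have := (gR_psd v).det_nonneg
  rw [← gdet_cast] at this
  exact_mod_cast this

lemma gdet_ne_zero {v : ι → Fin N → ℤ} (hv : LinearIndependent ℤ v) : gdet v ≠ 0 := by
  intro h
  obtain ⟨y, hy, h0⟩ := Matrix.exists_vecMul_eq_zero_iff.2 h
  have h1 : (y ᵥ* Matrix.of v) ⬝ᵥ (y ᵥ* Matrix.of v) = 0 := by
    rw [← Matrix.vecMul_vecMul] at h0
    calc (y ᵥ* Matrix.of v) ⬝ᵥ (y ᵥ* Matrix.of v)
        = ((y ᵥ* Matrix.of v) ᵥ* (Matrix.of v)ᵀ) ⬝ᵥ y := by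
          rw [Matrix.vecMul_transpose, dotProduct_comm _ y, Matrix.dotProduct_mulVec]
      _ = 0 := by rw [h0]; simp
  have h2 : y ᵥ* Matrix.of v = 0 := dotProduct_self_eq_zero.1 h1
  apply hy
  have := Fintype.linearIndependent_iff.1 hv y (by
    rw [← h2]
    ext j
    simp [Matrix.vecMul, dotProduct])
  ext i; exact this i

lemma gdet_pos {v : ι → Fin N → ℤ} (hv : LinearIndependent ℤ v) : 0 < gdet v :=
  lt_of_le_of_ne (gdet_nonneg v) (gdet_ne_zero hv).symm

lemma gR_posDef {v : ι → Fin N → ℤ} (hv : LinearIndependent ℤ v) : (gR v).PosDef := by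
  rw [(gR_psd v).posDef_iff_det_ne_zero, ← gdet_cast]
  exact_mod_cast gdet_ne_zero hv

lemma gdet_submod {w : α → Fin N → ℤ} {u : β → Fin N → ℤ} {v : γ → Fin N → ℤ}
    (h : LinearIndependent ℤ (Sum.elim w (Sum.elim u v))) :
    gdet (Sum.elim w (Sum.elim u v)) * gdet w ≤ gdet (Sum.elim w u) * gdet (Sum.elim w v) := by
  have := koteljanskii (gR_posDef h)
  have e1 : (gR (Sum.elim w (Sum.elim u v))).submatrix Sum.inl Sum.inl = gR w := by
    ext i j
    simp [gR, Matrix.mul_apply]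
  have e2 : (gR (Sum.elim w (Sum.elim u v))).submatrix (Sum.map id Sum.inl) (Sum.map id Sum.inl)
      = gR (Sum.elim w u) := by
    ext i j
    rcases i with i | i <;> rcases j with j | j <;> simp [gR, Matrix.mul_apply]
  have e3 : (gR (Sum.elim w (Sum.elim u v))).submatrix (Sum.map id Sum.inr) (Sum.map id Sum.inr)
      = gR (Sum.elim w v) := by
    ext i j
    rcases i with i | i <;> rcases j with j | j <;> simp [gR, Matrix.mul_apply]
  rw [e1, e2, e3, ← gdet_cast, ← gdet_cast, ← gdet_cast, ← gdet_cast] at this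
  exact_mod_cast this

lemma gdet_basis_le {L : Submodule ℤ (Fin N → ℤ)} (b : Module.Basis ι ℤ L)
    (v : ι → Fin N → ℤ) (hv : ∀ i, v i ∈ L) (hne : gdet v ≠ 0) :
    gdet (fun i => (b i : Fin N → ℤ)) ≤ gdet v := by
  set M : Matrix ι ι ℤ := Matrix.of fun i j => b.repr ⟨v i, hv i⟩ j with hM
  have h1 : Matrix.of v = M * Matrix.of (fun i => (b i : Fin N → ℤ)) := by
    ext i k
    have := congrArg (fun z : L => (z : Fin N → ℤ) k) (b.sum_repr ⟨v i, hv i⟩)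
    simp only [AddSubmonoidClass.coe_finsetSum, Submodule.coe_smul] at this
    simp only [Matrix.mul_apply, hM, Matrix.of_apply]
    rw [← this]
    simp
  have h2 : gdet v = M.det ^ 2 * gdet (fun i => (b i : Fin N → ℤ)) := by
    unfold gdet
    rw [h1, Matrix.transpose_mul]
    have : M * Matrix.of (fun i => (b i : Fin N → ℤ)) *
      ((Matrix.of (fun i => (b i : Fin N → ℤ)))ᵀ * Mᵀ) =
      M * (Matrix.of (fun i => (b i : Fin N → ℤ)) *
      (Matrix.of (fun i => (b i : Fin N → ℤ)))ᵀ) * Mᵀ := by simp only [Matrix.mul_assoc]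
    rw [this, Matrix.det_mul, Matrix.det_mul, Matrix.det_transpose]
    ring
  have h3 : M.det ^ 2 ≠ 0 := by
    intro h; rw [h2, h] at hne; simp at hne
  have h4 : 1 ≤ M.det ^ 2 := by
    have := sq_nonneg M.det
    omega
  rw [h2]
  nlinarith [gdet_nonneg (fun i => (b i : Fin N → ℤ))]

lemma gdet_reindex (e : ι ≃ α) (v : α → Fin N → ℤ) : gdet (fun i => v (e i)) = gdet v := by
  unfold gdet
  rw [← Matrix.det_submatrix_equiv_self e]
  rfl

end gram

section heights
variable {N : ℕ}

/-- The inclusion of integer vectors in rational vectors. -/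
noncomputable def toQ (N : ℕ) : (Fin N → ℤ) →ₗ[ℤ] (Fin N → ℚ) :=
  (Algebra.linearMap ℤ ℚ).compLeft (Fin N)

@[simp] lemma toQ_apply (z : Fin N → ℤ) (i : Fin N) : toQ N z i = (z i : ℚ) := rfl

lemma toQ_inj : Function.Injective (toQ N) := by
  intro a b h
  ext i
  have := congrFun h i
  simpa using this

/-- Integer points of a rational subspace. -/
noncomputable def lat (U : Submodule ℚ (Fin N → ℚ)) : Submodule ℤ (Fin N → ℤ) :=
  (U.restrictScalars ℤ).comap (toQ N)

lemma mem_lat {U : Submodule ℚ (Fin N → ℚ)} {z : Fin N → ℤ} : z ∈ lat U ↔ toQ N z ∈ U := Iff.rfl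

lemma exists_scale (u : Fin N → ℚ) : ∃ m : ℤ, m ≠ 0 ∧ ∃ z : Fin N → ℤ, toQ N z = (m : ℚ) • u := by
  obtain ⟨m, hm⟩ := IsLocalization.exist_integer_multiples_of_finite (nonZeroDivisors ℤ) u
  refine ⟨m, nonZeroDivisors.ne_zero m.2, ?_⟩
  choose z hz using hm
  refine ⟨z, ?_⟩
  ext i
  have := hz i
  simp only [toQ_apply, Pi.smul_apply, smul_eq_mul]
  simpa [Algebra.smul_def] using this

lemma span_lat (U : Submodule ℚ (Fin N → ℚ)) :
    Submodule.span ℚ (toQ N '' (lat U : Set (Fin N → ℤ))) = U := by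
  apply le_antisymm
  · rw [Submodule.span_le]
    rintro _ ⟨z, hz, rfl⟩
    exact hz
  · intro u hu
    obtain ⟨m, hm, z, hz⟩ := exists_scale u
    have h1 : toQ N z ∈ U := by rw [hz]; exact U.smul_mem _ hu
    have hu' : u = (m : ℚ)⁻¹ • toQ N z := by
      rw [hz, smul_smul, inv_mul_cancel₀ (by exact_mod_cast hm), one_smul]
    rw [hu']
    exact Submodule.smul_mem _ _ (Submodule.subset_span ⟨z, h1, rfl⟩)

lemma linInd_Q {ι : Type*} {v : ι → Fin N → ℤ} :
    LinearIndependent ℤ v ↔ LinearIndependent ℚ (fun i => toQ N (v i)) := by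
  rw [← LinearIndependent.iff_fractionRing ℤ ℚ]
  exact ((toQ N).linearIndependent_iff (LinearMap.ker_eq_bot.2 toQ_inj)).symm

lemma span_basis {ι : Type*} {U : Submodule ℚ (Fin N → ℚ)} (b : Module.Basis ι ℤ (lat U)) :
    Submodule.span ℚ (Set.range fun i => toQ N (b i : Fin N → ℤ)) = U := by
  apply le_antisymm
  · rw [Submodule.span_le]
    rintro _ ⟨i, rfl⟩
    exact (b i).2
  · conv_lhs => rw [← span_lat U]
    rw [Submodule.span_le]
    rintro _ ⟨z, hz, rfl⟩
    have h1 : (⟨z, hz⟩ : lat U) ∈ Submodule.span ℤ (Set.range b) := by rw [b.span_eq]; trivial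
    have h2 := Submodule.mem_map_of_mem (f := (toQ N).comp (lat U).subtype) h1
    rw [Submodule.map_span, ← Set.range_comp] at h2
    exact Submodule.span_subset_span ℤ ℚ _ h2

lemma basis_indep {ι : Type*} {U : Submodule ℚ (Fin N → ℚ)} (b : Module.Basis ι ℤ (lat U)) :
    LinearIndependent ℤ (fun i => (b i : Fin N → ℤ)) :=
  b.linearIndependent.map' (lat U).subtype (by simp)

lemma card_basis {ι : Type*} [Fintype ι] {U : Submodule ℚ (Fin N → ℚ)}
    (b : Module.Basis ι ℤ (lat U)) : Fintype.card ι = Module.finrank ℚ U := by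
  have h := linearIndependent_iff_card_eq_finrank_span.1 (linInd_Q.1 (basis_indep b))
  rw [h, Set.finrank, span_basis b]

open Classical in
/-- Squared height of a rational subspace. -/
noncomputable def D (U : Submodule ℚ (Fin N → ℚ)) : ℤ :=
  gdet (fun i => (Module.Free.chooseBasis ℤ (lat U) i : Fin N → ℤ))

lemma D_le_gdet {ι : Type*} [Fintype ι] [DecidableEq ι] (U : Submodule ℚ (Fin N → ℚ))
    (v : ι → Fin N → ℤ) (hv : ∀ i, toQ N (v i) ∈ U) (hind : LinearIndependent ℤ v)
    (hc : Fintype.card ι = Module.finrank ℚ U) : D U ≤ gdet v := by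
  classical
  set b := Module.Free.chooseBasis ℤ (lat U) with hb
  have e : Module.Free.ChooseBasisIndex ℤ (lat U) ≃ ι :=
    Fintype.equivOfCardEq (by rw [card_basis b, hc])
  have h1 := gdet_basis_le (b.reindex e) v hv (gdet_ne_zero hind)
  unfold D
  rw [← gdet_reindex e.symm]
  convert h1 using 4
  simp [hb]

lemma D_eq_gdet {ι : Type*} [Fintype ι] [DecidableEq ι] {U : Submodule ℚ (Fin N → ℚ)}
    (b : Module.Basis ι ℤ (lat U)) : D U = gdet (fun i => (b i : Fin N → ℤ)) := by
  classical
  apply le_antisymm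
  · exact D_le_gdet U _ (fun i => (b i).2) (basis_indep b) (card_basis b)
  · set c := Module.Free.chooseBasis ℤ (lat U) with hc
    have e : ι ≃ Module.Free.ChooseBasisIndex ℤ (lat U)  :=
      Fintype.equivOfCardEq (by rw [card_basis b, card_basis c])
    unfold D
    rw [← gdet_reindex e]
    exact gdet_basis_le b _ (fun i => (c (e i)).2)
      (gdet_ne_zero ((basis_indep c).comp e e.injective))

lemma D_pos (U : Submodule ℚ (Fin N → ℚ)) : 1 ≤ D U := by
  classical
  exact gdet_pos (basis_indep _)

lemma exists_extend {W U : Submodule ℚ (Fin N → ℚ)} (h : W ≤ U) {α : Type*}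
    (w : Module.Basis α ℤ (lat W)) :
    ∃ (n : ℕ) (b : Module.Basis (α ⊕ Fin n) ℤ (lat U)),
      ∀ i, (b (Sum.inl i) : Fin N → ℤ) = w i := by
  have hle : lat W ≤ lat U := fun z hz => h hz
  set W' : Submodule ℤ (lat U) := (lat W).comap (lat U).subtype with hW'
  have e : lat W ≃ₗ[ℤ] W' := (Submodule.comapSubtypeEquivOfLe hle).symm
  have : Module.IsTorsionFree ℤ (lat U ⧸ W') := by
    constructor
    intro r hr
    have hr0 : r ≠ 0 := hr.ne_zero
    intro x y hxy
    obtain ⟨x, rfl⟩ := Submodule.Quotient.mk_surjective _ x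
    obtain ⟨y, rfl⟩ := Submodule.Quotient.mk_surjective _ y
    simp only [← Submodule.Quotient.mk_smul] at hxy
    rw [Submodule.Quotient.eq] at hxy ⊢
    rw [← smul_sub] at hxy
    simp only [hW', Submodule.mem_comap, Submodule.subtype_apply, mem_lat, map_smul,
      Submodule.coe_smul] at hxy ⊢
    have : toQ N ((x - y : lat U) : Fin N → ℤ)
        = (r : ℚ)⁻¹ • (r • toQ N ((x - y : lat U) : Fin N → ℤ)) := by
      rw [← Int.cast_smul_eq_zsmul ℚ, smul_smul, inv_mul_cancel₀ (by exact_mod_cast hr0), one_smul]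
    rw [this]
    exact W.smul_mem _ hxy
  obtain ⟨n, bQ⟩ : Σ n : ℕ, Module.Basis (Fin n) ℤ (lat U ⧸ W') :=
    Module.basisOfFiniteTypeTorsionFree'
  refine ⟨n, (w.map (Submodule.comapSubtypeEquivOfLe hle).symm).sumQuot bQ, fun i => ?_⟩
  simp

lemma D_submod (U V : Submodule ℚ (Fin N → ℚ)) : D (U ⊔ V) * D (U ⊓ V) ≤ D U * D V := by
  classical
  set w := Module.Free.chooseBasis ℤ (lat (U ⊓ V))
  obtain ⟨n, bU, hU⟩ := exists_extend (inf_le_left : U ⊓ V ≤ U) w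
  obtain ⟨m, bV, hV⟩ := exists_extend (inf_le_right : U ⊓ V ≤ V) w
  set w' := fun i => (w i : Fin N → ℤ) with hw'
  set u := fun i => (bU (Sum.inr i) : Fin N → ℤ) with hu
  set v := fun i => (bV (Sum.inr i) : Fin N → ℤ) with hv
  have eU : (fun i => (bU i : Fin N → ℤ)) = Sum.elim w' u := by
    ext i : 1
    rcases i with i | i <;> simp [hU, hw', hu]
  have eV : (fun i => (bV i : Fin N → ℤ)) = Sum.elim w' v := by
    ext i : 1
    rcases i with i | i <;> simp [hV, hw', hv]
  set F := Sum.elim w' (Sum.elim u v) with hF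
  have hsU : U ≤ Submodule.span ℚ (Set.range fun i => toQ N (F i)) := by
    conv_lhs => rw [← span_basis bU]
    apply Submodule.span_mono
    rintro _ ⟨i, rfl⟩
    rcases i with i | i
    · exact ⟨Sum.inl i, by simp [hF, hw', hU]⟩
    · exact ⟨Sum.inr (Sum.inl i), by simp [hF, hu]⟩
  have hsV : V ≤ Submodule.span ℚ (Set.range fun i => toQ N (F i)) := by
    conv_lhs => rw [← span_basis bV]
    apply Submodule.span_mono
    rintro _ ⟨i, rfl⟩
    rcases i with i | i
    · exact ⟨Sum.inl i, by simp [hF, hw', hV]⟩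
    · exact ⟨Sum.inr (Sum.inr i), by simp [hF, hv]⟩
  have hmem : ∀ i, toQ N (F i) ∈ U ⊔ V := by
    intro i
    rcases i with i | i | i
    · exact (inf_le_left.trans le_sup_left : U ⊓ V ≤ U ⊔ V) (w i).2
    · exact (le_sup_left : U ≤ U ⊔ V) (bU (Sum.inr i)).2
    · exact (le_sup_right : V ≤ U ⊔ V) (bV (Sum.inr i)).2
  have hspan : Submodule.span ℚ (Set.range fun i => toQ N (F i)) = U ⊔ V := by
    apply le_antisymm
    · rw [Submodule.span_le]
      rintro _ ⟨i, rfl⟩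
      exact hmem i
    · exact sup_le hsU hsV
  have hcard : Fintype.card (Module.Free.ChooseBasisIndex ℤ (lat (U ⊓ V)) ⊕ (Fin n ⊕ Fin m)) =
      Module.finrank ℚ ↥(U ⊔ V) := by
    have h1 := Submodule.finrank_sup_add_finrank_inf_eq U V
    have h2 := card_basis bU
    have h3 := card_basis bV
    have h4 := card_basis w
    simp only [Fintype.card_sum] at h2 h3 ⊢
    omega
  have hind : LinearIndependent ℤ F := by
    rw [linInd_Q, linearIndependent_iff_card_eq_finrank_span, Set.finrank, hspan, hcard]
  have h1 := D_le_gdet (U ⊔ V) F hmem hind hcard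
  have h2 := gdet_submod hind
  rw [D_eq_gdet bU, D_eq_gdet bV, eU, eV, D_eq_gdet w]
  refine le_trans ?_ h2
  exact mul_le_mul_of_nonneg_right h1 (gdet_nonneg _)

/-- Logarithmic height. -/
noncomputable def ht (U : Submodule ℚ (Fin N → ℚ)) : ℝ := Real.log (D U) / 2

lemma ht_nonneg (U : Submodule ℚ (Fin N → ℚ)) : 0 ≤ ht U := by
  unfold ht
  have : (1 : ℝ) ≤ D U := by exact_mod_cast D_pos U
  have := Real.log_nonneg this
  linarith

lemma ht_submod (U V : Submodule ℚ (Fin N → ℚ)) : ht (U ⊔ V) + ht (U ⊓ V) ≤ ht U + ht V := by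
  unfold ht
  have p : ∀ W : Submodule ℚ (Fin N → ℚ), (0 : ℝ) < D W := fun W => by
    have : (1 : ℝ) ≤ D W := by exact_mod_cast D_pos W
    linarith
  have h : (D (U ⊔ V) : ℝ) * D (U ⊓ V) ≤ D U * D V := by exact_mod_cast D_submod U V
  have := Real.log_le_log (mul_pos (p _) (p _)) h
  rw [Real.log_mul (p _).ne' (p _).ne', Real.log_mul (p _).ne' (p _).ne'] at this
  linarith

end heights
end UE


namespace UE
section comb

lemma const_of_no_change {X : Type*} (S : ℕ → X) {j j' : ℕ} (hjj : j ≤ j')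
    (h : ∀ i, j ≤ i → i < j' → S i = S (i + 1)) : S j = S j' := by
  induction j', hjj using Nat.le_induction with
  | base => rfl
  | succ n hn ih =>
    rw [ih (fun i h1 h2 => h i h1 (by omega)), h n hn (by omega)]

lemma exists_changes {X : Type*} (S : ℕ → X) (hS : ∀ j0, ∃ j, j0 ≤ j ∧ S j ≠ S (j + 1)) :
    ∃ φ : ℕ → ℕ, StrictMono φ ∧ (∀ m, S (φ m) ≠ S (φ m + 1)) ∧
      (∀ m, S (φ (m + 1)) = S (φ m + 1)) ∧ ∀ j, ∃ m, j ≤ φ m ∧ S j = S (φ m) := by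
  classical
  set p : ℕ → Prop := fun j => S j ≠ S (j + 1) with hp
  have hinf : (setOf p).Infinite := by
    rw [Set.infinite_iff_exists_gt]
    intro a
    obtain ⟨j, hj, hj'⟩ := hS (a + 1)
    exact ⟨j, hj', by omega⟩
  have hmono : StrictMono (Nat.nth p) := Nat.nth_strictMono hinf
  refine ⟨Nat.nth p, hmono, fun m => Nat.nth_mem_of_infinite hinf m, fun m => ?_, fun j => ?_⟩
  · symm
    apply const_of_no_change S (hmono (Nat.lt_succ_self m))
    intro i h1 h2
    by_contra hc
    have hpi : p i := hc
    have e := Nat.nth_count hpi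
    rw [← e] at h1 h2
    have a1 := hmono.lt_iff_lt.1 (Nat.lt_of_succ_le h1)
    have a2 := hmono.lt_iff_lt.1 h2
    omega
  · refine ⟨Nat.count p j, Nat.le_nth_count hinf j, ?_⟩
    apply const_of_no_change S (Nat.le_nth_count hinf j)
    intro i h1 h2
    by_contra hc
    have hpi : p i := hc
    have e := Nat.nth_count hpi
    rw [← e] at h2
    have a2 := hmono.lt_iff_lt.1 h2
    have := Nat.count_monotone p h1
    omega

variable {E : Type*} [AddCommGroup E] [Module ℚ E] [FiniteDimensional ℚ E]

/-- The inductive property at level `k`. -/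
structure Lev (h : Submodule ℚ E → ℝ) (G : ℝ) (k : ℕ) (r : ℝ) (A : ℕ → Submodule ℚ E) : Prop where
  dim : ∀ j, Module.finrank ℚ (A j) = k
  dim2 : ∀ j, Module.finrank ℚ ↥(A j ⊔ A (j + 1)) = k + 1
  tail : ∀ W : Submodule ℚ E, W ≠ ⊤ → ∀ j0, ∃ j, j0 ≤ j ∧ ¬ A j ≤ W
  up : ∀ j, h (A j ⊔ A (j + 1)) ≤ r * h (A (j + 1))
  down : ∀ j, h (A j ⊔ A (j + 1)) ≤ r * G * h (A j)
  pos : ∀ j, 0 < h (A j)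

lemma Lev.step {h : Submodule ℚ E → ℝ} {G : ℝ} {k : ℕ} {r : ℝ} {A : ℕ → Submodule ℚ E}
    (h0 : ∀ U, 0 ≤ h U) (hsub : ∀ U V, h (U ⊔ V) + h (U ⊓ V) ≤ h U + h V)
    (hG : 0 < G) (hr1 : r < 1) (hk : k + 1 < Module.finrank ℚ E) (L : Lev h G k r A) :
    0 < r ∧ (r * G < 1 → ∃ T, Lev h G (k + 1) (1 - (1 - r) / (G * r)) T) := by
  set S : ℕ → Submodule ℚ E := fun j => A j ⊔ A (j + 1) with hSdef
  have hSdim : ∀ j, Module.finrank ℚ (S j) = k + 1 := L.dim2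
  have hchange : ∀ j0, ∃ j, j0 ≤ j ∧ S j ≠ S (j + 1) := by
    intro j0
    by_contra hcon
    push Not at hcon
    have hne : S j0 ≠ ⊤ := by
      intro ht
      have := hSdim j0
      rw [ht, finrank_top] at this
      omega
    obtain ⟨j, hj, hA⟩ := L.tail (S j0) hne j0
    apply hA
    rw [const_of_no_change S hj (fun i h1 _ => hcon i h1)]
    exact le_sup_left
  obtain ⟨φ, hφ, hφ1, hφ2, hφ3⟩ := exists_changes S hchange
  set T : ℕ → Submodule ℚ E := fun m => S (φ m) with hT
  have hinf : ∀ m, T m ⊓ T (m + 1) = A (φ m + 1) := by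
    intro m
    have e : T (m + 1) = S (φ m + 1) := hφ2 m
    rw [e]
    symm
    apply Submodule.eq_of_le_of_finrank_le
    · exact le_inf le_sup_right le_sup_left
    · rw [L.dim]
      by_contra hcon
      push Not at hcon
      have h1 : T m ⊓ S (φ m + 1) = T m := by
        apply Submodule.eq_of_le_of_finrank_le inf_le_left
        rw [hSdim]; omega
      have h2 : T m ⊓ S (φ m + 1) = S (φ m + 1) := by
        apply Submodule.eq_of_le_of_finrank_le inf_le_right
        rw [hSdim]; omega
      exact hφ1 m (h1.symm.trans h2)
  have b1 : ∀ m, h (T m) ≤ r * h (A (φ m + 1)) := fun m => L.up _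
  have b2 : ∀ m, h (T (m + 1)) ≤ r * G * h (A (φ m + 1)) := fun m => by
    have e : T (m + 1) = S (φ m + 1) := hφ2 m
    rw [e]; exact L.down _
  have b3 : ∀ m, h (T m ⊔ T (m + 1)) + h (A (φ m + 1)) ≤ h (T m) + h (T (m + 1)) := fun m => by
    have := hsub (T m) (T (m + 1))
    rwa [hinf] at this
  have hr : 0 < r := by
    by_contra hcon
    have p := L.pos (φ 0 + 1)
    have c1 := b1 0
    have c2 := b2 0
    have c3 := b3 0
    have c4 := h0 (T 0 ⊔ T (0 + 1))
    have : r * h (A (φ 0 + 1)) ≤ 0 := mul_nonpos_of_nonpos_of_nonneg (by linarith) p.le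
    have : r * G * h (A (φ 0 + 1)) ≤ 0 := by
      have : r * G * h (A (φ 0 + 1)) = G * (r * h (A (φ 0 + 1))) := by ring
      rw [this]
      exact mul_nonpos_of_nonneg_of_nonpos hG.le (by assumption)
    linarith
  refine ⟨hr, fun hrG => ⟨T, ?_, ?_, ?_, ?_, ?_, ?_⟩⟩
  · exact fun j => hSdim _
  · intro m
    have h1 := Submodule.finrank_sup_add_finrank_inf_eq (T m) (T (m + 1))
    rw [hinf, L.dim, hSdim, hSdim] at h1
    omega
  · intro W hW m0
    obtain ⟨j, hj, hA⟩ := L.tail W hW (φ m0)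
    obtain ⟨m, hm, hm'⟩ := hφ3 j
    refine ⟨m, hφ.le_iff_le.1 (hj.trans hm), fun hle => hA ?_⟩
    calc A j ≤ S j := le_sup_left
      _ = T m := hm'
      _ ≤ W := hle
  · intro m
    have c1 := b1 m
    have c2 := b2 m
    have c3 := b3 m
    have : (1 - r) / (G * r) * h (T (m + 1)) ≤ (1 - r) * h (A (φ m + 1)) := by
      rw [div_mul_eq_mul_div, div_le_iff₀ (by positivity)]
      nlinarith
    linarith
  · intro m
    have c1 := b1 m
    have c2 := b2 m
    have c3 := b3 m
    have e : (1 - (1 - r) / (G * r)) * G * h (T m) = h (T m) - (1 - r * G) * (h (T m) / r) := by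
      field_simp
      ring
    have : h (T m) / r ≤ h (A (φ m + 1)) := by
      rw [div_le_iff₀ hr]; linarith
    have := mul_le_mul_of_nonneg_left this (by linarith : 0 ≤ 1 - r * G)
    rw [e]
    linarith
  · intro m
    have c2 := b2 m
    have c3 := b3 m
    have c4 := h0 (T m ⊔ T (m + 1))
    have p := L.pos (φ m + 1)
    have := mul_pos (by linarith : 0 < 1 - r * G) p
    linarith

/-- The sequence of coefficients. -/
noncomputable def cc (g G : ℝ) (k : ℕ) : ℝ := 1 - g * ∑ i ∈ Finset.range k, (1 / G) ^ i

lemma cc_succ (g G : ℝ) (k : ℕ) : cc g G (k + 1) = cc g G k - g * (1 / G) ^ k := by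
  unfold cc; rw [Finset.sum_range_succ]; ring

lemma cc_pos_of {g G : ℝ} (hG : 0 < G) {k : ℕ} (h1 : 0 < cc g G k)
    (h2 : cc g G k ≤ cc g G (k + 1) * G) : ∀ n, k ≤ n → 0 < cc g G n ∧ cc g G n ≤ cc g G (n + 1) * G := by
  intro n hn
  induction n, hn using Nat.le_induction with
  | base => exact ⟨h1, h2⟩
  | succ n hn ih =>
    obtain ⟨a, b⟩ := ih
    have c : 0 < cc g G (n + 1) := by
      by_contra hc
      have := mul_nonpos_of_nonpos_of_nonneg (not_lt.1 hc) hG.le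
      linarith
    refine ⟨c, ?_⟩
    rw [cc_succ g G (n + 1)]
    have e := cc_succ g G n
    have : (cc g G (n + 1) - g * (1 / G) ^ (n + 1)) * G = cc g G (n + 1) * G - g * (1 / G) ^ n := by
      rw [pow_succ]; field_simp
    rw [this]
    linarith

theorem comb_main {h : Submodule ℚ E → ℝ} {G g : ℝ} {A : ℕ → Submodule ℚ E}
    (h0 : ∀ U, 0 ≤ h U) (hsub : ∀ U V, h (U ⊔ V) + h (U ⊓ V) ≤ h U + h V)
    (hG : 0 < G) (hg : 0 < g) {n : ℕ} (hn : 1 ≤ n) (hE : Module.finrank ℚ E = n + 1)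
    (L : Lev h G 1 (1 - g) A) : 0 ≤ cc g G n := by
  by_contra hneg
  push Not at hneg
  have key : ∀ k, k + 1 ≤ n →
      0 < cc g G k ∧ ∃ T, Lev h G (k + 1) (cc g G (k + 1) / cc g G k) T := by
    intro k
    induction k with
    | zero =>
      intro _
      have e0 : cc g G 0 = 1 := by simp [cc]
      have e1 : cc g G 1 = 1 - g := by simp [cc]
      rw [e0, zero_add, e1, div_one]
      exact ⟨one_pos, A, L⟩
    | succ k ih =>
      intro hk
      obtain ⟨hc, T, hT⟩ := ih (by omega)
      have hr1 : cc g G (k + 1) / cc g G k < 1 := by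
        rw [div_lt_one hc, cc_succ]
        have : 0 < g * (1 / G) ^ k := by positivity
        linarith
      obtain ⟨hr, hst⟩ := hT.step h0 hsub hG hr1 (by omega)
      have hc1 : 0 < cc g G (k + 1) := (div_pos_iff_of_pos_right hc).1 hr
      refine ⟨hc1, ?_⟩
      have hlt : cc g G (k + 1) / cc g G k * G < 1 := by
        by_contra hcon
        push Not at hcon
        rw [div_mul_eq_mul_div, le_div_iff₀ hc, one_mul] at hcon
        have := (cc_pos_of hG hc hcon n (by omega)).1
        linarith
      have e : 1 - (1 - cc g G (k + 1) / cc g G k) / (G * (cc g G (k + 1) / cc g G k)) =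
          cc g G (k + 1 + 1) / cc g G (k + 1) := by
        rw [cc_succ g G (k + 1)]
        have e := cc_succ g G k
        have e2 : g * (1 / G) ^ (k + 1) = (cc g G k - cc g G (k + 1)) / G := by
          rw [e, pow_succ]; field_simp; ring
        rw [e2]
        field_simp
      rw [← e]
      exact hst hlt
  obtain ⟨m, rfl⟩ : ∃ m, n = m + 1 := ⟨n - 1, by omega⟩
  obtain ⟨hc, T, hT⟩ := key m le_rfl
  have h1 := hT.up 0
  have h2 := h0 (T 0 ⊔ T (0 + 1))
  have h3 := hT.pos (0 + 1)
  have h4 := mul_neg_of_neg_of_pos (div_neg_of_neg_of_pos hneg hc) h3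
  linarith

end comb
end UE

namespace UE
section points
variable {d : ℕ} (ξ : Fin d → ℝ)

/-- Nearest integer numerators. -/
noncomputable def num (q : ℕ) (j : Fin d) : ℤ := round ((q : ℝ) * ξ j)

/-- The approximation error. -/
noncomputable def er (q : ℕ) : ℝ := ‖fun j => (q : ℝ) * ξ j - num ξ q j‖

lemma er_nonneg (q : ℕ) : 0 ≤ er ξ q := norm_nonneg _

lemma le_er (q : ℕ) (j : Fin d) : |(q : ℝ) * ξ j - num ξ q j| ≤ er ξ q :=
  norm_le_pi_norm (fun j => (q : ℝ) * ξ j - num ξ q j) j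

lemma er_le {q : ℕ} {t : ℝ} (ht : 0 ≤ t) (a : Fin d → ℤ)
    (h : ∀ j, |(q : ℝ) * ξ j - a j| ≤ t) : er ξ q ≤ t := by
  unfold er
  rw [pi_norm_le_iff_of_nonneg ht]
  intro j
  exact (round_le _ _).trans (h j)

lemma er_le_half (q : ℕ) : er ξ q ≤ 1 := by
  unfold er
  rw [pi_norm_le_iff_of_nonneg zero_le_one]
  intro j
  exact (abs_sub_round _).trans (by norm_num)

lemma lin_form_ne {ξ : Fin d → ℝ} (hirr : TotallyIrrational ξ) (c0 : ℚ) (c : Fin d → ℚ)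
    (h : (c0 : ℝ) + ∑ j, (c j : ℝ) * ξ j = 0) : c0 = 0 ∧ ∀ j, c j = 0 := by
  have := Fintype.linearIndependent_iff.1 hirr (Fin.cons c0 c) (by
    rw [Fin.sum_univ_succ]
    simpa [Rat.smul_def] using h)
  exact ⟨this 0, fun j => this j.succ⟩

lemma er_pos {ξ : Fin d → ℝ} (hd : 0 < d) (hirr : TotallyIrrational ξ) {q : ℕ} (hq : 1 ≤ q) :
    0 < er ξ q := by
  rcases (er_nonneg ξ q).lt_or_eq with h | h
  · exact h
  · exfalso
    have h1 := le_er ξ q ⟨0, hd⟩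
    rw [← h] at h1
    have h2 := abs_nonpos_iff.1 h1
    have := (lin_form_ne hirr (-(num ξ q ⟨0, hd⟩ : ℚ)) (Pi.single ⟨0, hd⟩ (q : ℚ)) (by
      rw [Finset.sum_eq_single ⟨0, hd⟩]
      · simp; linarith
      · intro b _ hb; simp [Pi.single_eq_of_ne hb]
      · simp)).2 ⟨0, hd⟩
    simp at this
    omega

/-- best approximation sequence -/
structure Best (qs : ℕ → ℕ) : Prop where
  one_le : ∀ n, 1 ≤ qs n
  er_lt : ∀ n, er ξ (qs (n + 1)) < er ξ (qs n)
  le_of_lt : ∀ n q, 1 ≤ q → q < qs (n + 1) → er ξ (qs n) ≤ er ξ q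
  inv : ∀ n q, 1 ≤ q → q < qs n → er ξ (qs n) < er ξ q

lemma exists_best (hpos : ∀ q, 1 ≤ q → 0 < er ξ q)
    (hsmall : ∀ t, 0 < t → ∃ q, 1 ≤ q ∧ er ξ q < t) : ∃ qs, Best ξ qs := by
  classical
  have hn : ∀ q : ℕ, ∃ q' : ℕ, 1 ≤ q → (1 ≤ q' ∧ er ξ q' < er ξ q ∧
      ∀ p, 1 ≤ p → p < q' → er ξ q ≤ er ξ p) := by
    intro q
    by_cases hq : 1 ≤ q
    · have hex := hsmall _ (hpos q hq)
      refine ⟨Nat.find hex, fun _ => ⟨(Nat.find_spec hex).1, (Nat.find_spec hex).2, ?_⟩⟩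
      intro p hp hlt
      have := Nat.find_min hex hlt
      push Not at this
      exact this hp
    · exact ⟨0, fun h => absurd h hq⟩
  choose nxt hnxt using hn
  set qs : ℕ → ℕ := fun n => nxt^[n] 1 with hqs
  have hs : ∀ n, qs (n + 1) = nxt (qs n) := fun n => Function.iterate_succ_apply' _ _ _
  have h1 : ∀ n, 1 ≤ qs n := by
    intro n
    induction n with
    | zero => simp [hqs]
    | succ n ih => rw [hs]; exact (hnxt _ ih).1
  have h2 : ∀ n, er ξ (qs (n + 1)) < er ξ (qs n) := fun n => by
    rw [hs]; exact (hnxt _ (h1 n)).2.1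
  have h3 : ∀ n q, 1 ≤ q → q < qs (n + 1) → er ξ (qs n) ≤ er ξ q := fun n q hq hlt => by
    rw [hs] at hlt; exact (hnxt _ (h1 n)).2.2 q hq hlt
  refine ⟨qs, h1, h2, h3, ?_⟩
  intro n q hq hlt
  cases n with
  | zero => simp [hqs] at hlt; omega
  | succ n => exact (h2 n).trans_le (h3 n q hq hlt)

variable {ξ}

lemma Best.strictMono {qs : ℕ → ℕ} (B : Best ξ qs) : StrictMono qs := by
  apply strictMono_nat_of_lt_succ
  intro n
  by_contra hc
  rcases (not_lt.1 hc).lt_or_eq with h | h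
  · have := B.inv n _ (B.one_le (n + 1)) h
    linarith [B.er_lt n]
  · have := B.er_lt n
    rw [h] at this
    exact lt_irrefl _ this

variable (ξ)

/-- The integer point attached to a denominator. -/
noncomputable def pt (q : ℕ) : Fin (d + 1) → ℤ := Fin.cons (q : ℤ) (num ξ q)

/-- The rational line attached to a denominator. -/
noncomputable def ln (q : ℕ) : Submodule ℚ (Fin (d + 1) → ℚ) := Submodule.span ℚ {toQ _ (pt ξ q)}

lemma pt_ne {q : ℕ} (hq : 1 ≤ q) : toQ _ (pt ξ q) ≠ 0 := by
  intro h
  have := congrFun h 0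
  simp [pt] at this
  omega

lemma finrank_ln {q : ℕ} (hq : 1 ≤ q) : Module.finrank ℚ (ln ξ q) = 1 :=
  finrank_span_singleton (pt_ne ξ hq)

lemma gdet_one {N : ℕ} (v : Fin 1 → Fin N → ℤ) : gdet v = v 0 ⬝ᵥ v 0 := by
  unfold gdet
  rw [Matrix.det_fin_one]
  simp [Matrix.mul_apply, dotProduct]

lemma gdet_two {N : ℕ} (x y : Fin N → ℤ) :
    gdet ![x, y] = (x ⬝ᵥ x) * (y ⬝ᵥ y) - (x ⬝ᵥ y) * (x ⬝ᵥ y) := by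
  unfold gdet
  rw [Matrix.det_fin_two]
  have e : ∀ i j, (Matrix.of ![x, y] * (Matrix.of ![x, y]).transpose) i j = ![x, y] i ⬝ᵥ ![x, y] j := by
    intro i j
    simp [Matrix.mul_apply, dotProduct]
  simp only [e]
  simp [dotProduct_comm y x]

lemma D_ln {q : ℕ} (hq : 1 ≤ q) (hinv : ∀ q', 1 ≤ q' → q' < q → er ξ q < er ξ q') :
    D (ln ξ q) = pt ξ q ⬝ᵥ pt ξ q := by
  classical
  have hc := card_basis (Module.Free.chooseBasis ℤ (lat (ln ξ q)))
  rw [finrank_ln ξ hq] at hc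
  have e : Module.Free.ChooseBasisIndex ℤ (lat (ln ξ q)) ≃ Fin 1 :=
    Fintype.equivOfCardEq (by simpa using hc)
  set b := (Module.Free.chooseBasis ℤ (lat (ln ξ q))).reindex e
  rw [D_eq_gdet b, gdet_one]
  set y : Fin (d + 1) → ℤ := (b 0 : lat (ln ξ q)).1 with hy
  have hmem : pt ξ q ∈ lat (ln ξ q) := mem_lat.2 (Submodule.mem_span_singleton_self _)
  obtain ⟨g, hg⟩ : ∃ g : ℤ, pt ξ q = g • y := by
    have := b.sum_repr ⟨pt ξ q, hmem⟩
    refine ⟨b.repr ⟨pt ξ q, hmem⟩ 0, ?_⟩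
    have h2 := congrArg Subtype.val this
    simpa using h2.symm
  have hg0 : (q : ℤ) = g * y 0 := by
    have := congrFun hg 0
    simpa [pt] using this
  have hgj : ∀ j : Fin d, num ξ q j = g * y j.succ := fun j => by
    have := congrFun hg j.succ
    simpa [pt] using this
  have hgne : g ≠ 0 := by rintro rfl; simp at hg0; omega
  have hyne : y 0 ≠ 0 := by intro h; rw [h] at hg0; simp at hg0; omega
  have hg1 : |g| = 1 := by
    by_contra hne
    have hgp : 0 < |g| := abs_pos.2 hgne
    have hg2 : 2 ≤ |g| := by omega
    have hq' : (q : ℤ) = |g| * (y 0).natAbs := by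
      rw [Int.natCast_natAbs, ← abs_mul, ← hg0]; simp
    have hyp : 1 ≤ (y 0).natAbs := Nat.one_le_iff_ne_zero.2 (Int.natAbs_ne_zero.2 hyne)
    have hlt : (y 0).natAbs < q := by
      suffices h : (((y 0).natAbs : ℕ) : ℤ) < (q : ℤ) from Int.ofNat_lt.1 h
      rw [hq']
      have : (1 : ℤ) ≤ (y 0).natAbs := by exact_mod_cast hyp
      nlinarith
    have h1 := hinv _ hyp hlt
    have h2 : er ξ (y 0).natAbs ≤ er ξ q := by
      apply er_le ξ (er_nonneg ξ q) (fun j => (y 0).sign * y j.succ)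
      intro j
      refine le_trans ?_ (le_er ξ q j)
      have hs : (((y 0).natAbs : ℕ) : ℝ) = ((y 0).sign : ℝ) * (y 0 : ℝ) := by
        have : (((y 0).natAbs : ℕ) : ℤ) = (y 0).sign * (y 0) := by
          rw [Int.sign_mul_self_eq_abs, Int.natCast_natAbs]
        have h3 := congrArg (fun z : ℤ => (z : ℝ)) this
        rw [← Int.cast_mul]
        exact_mod_cast (Int.cast_natCast (R := ℝ) (y 0).natAbs).symm.trans h3
      have hqr : (q : ℝ) = (g : ℝ) * (y 0 : ℝ) := by exact_mod_cast hg0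
      have hsa : |((y 0).sign : ℝ)| = 1 := by
        rcases lt_or_gt_of_ne hyne with h | h
        · rw [Int.sign_eq_neg_one_of_neg h]; simp
        · rw [Int.sign_eq_one_of_pos h]; simp
      rw [hs, hgj j, hqr]
      push_cast
      have e1 : ((y 0).sign : ℝ) * (y 0 : ℝ) * ξ j - ((y 0).sign : ℝ) * (y j.succ : ℝ)
        = ((y 0).sign : ℝ) * ((y 0 : ℝ) * ξ j - y j.succ) := by ring
      have e2 : (g : ℝ) * (y 0 : ℝ) * ξ j - (g : ℝ) * (y j.succ : ℝ)
        = (g : ℝ) * ((y 0 : ℝ) * ξ j - y j.succ) := by ring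
      rw [e1, e2, abs_mul, abs_mul, hsa]
      have : (1 : ℝ) ≤ |(g : ℝ)| := by exact_mod_cast hgp
      exact mul_le_mul_of_nonneg_right this (abs_nonneg _)
    linarith
  rw [hg]
  simp only [smul_dotProduct, dotProduct_smul, smul_eq_mul]
  rw [← mul_assoc, ← abs_mul_abs_self, hg1]
  simp

/-- A constant controlling the size of the points. -/
noncomputable def KK : ℝ := 1 + ∑ j, (|ξ j| + 1) ^ 2

lemma KK_pos : 1 ≤ KK ξ := by
  have : 0 ≤ ∑ j, (|ξ j| + 1) ^ 2 := Finset.sum_nonneg fun j _ => sq_nonneg _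
  unfold KK
  linarith

lemma dot_eq (q : ℕ) : ((pt ξ q ⬝ᵥ pt ξ q : ℤ) : ℝ) = (q : ℝ) ^ 2 + ∑ j, (num ξ q j : ℝ) ^ 2 := by
  simp only [dotProduct, Fin.sum_univ_succ]
  push_cast
  simp [pt, sq]

lemma le_dot (q : ℕ) : (q : ℝ) ^ 2 ≤ ((pt ξ q ⬝ᵥ pt ξ q : ℤ) : ℝ) := by
  rw [dot_eq]
  have : 0 ≤ ∑ j, (num ξ q j : ℝ) ^ 2 := Finset.sum_nonneg fun j _ => sq_nonneg _
  linarith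

lemma dot_le {q : ℕ} (hq : 1 ≤ q) : ((pt ξ q ⬝ᵥ pt ξ q : ℤ) : ℝ) ≤ KK ξ * (q : ℝ) ^ 2 := by
  rw [dot_eq, KK, add_mul, one_mul, Finset.sum_mul]
  have hq' : (1 : ℝ) ≤ q := by exact_mod_cast hq
  gcongr with j
  rw [← mul_pow]
  apply sq_le_sq'
  · have h1 := abs_le.1 ((le_er ξ q j).trans (er_le_half ξ q))
    have h2 := neg_abs_le (ξ j)
    nlinarith
  · have h1 := abs_le.1 ((le_er ξ q j).trans (er_le_half ξ q))
    have h2 := le_abs_self (ξ j)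
    nlinarith

lemma indep_pair {q q' : ℕ} (hq : 1 ≤ q) (hqq : q < q') (her : er ξ q' < er ξ q) :
    LinearIndependent ℤ ![pt ξ q, pt ξ q'] := by
  rw [LinearIndependent.pair_iff]
  intro s t hst
  have h0 : s * (q : ℤ) + t * q' = 0 := by
    have := congrFun hst 0
    simpa [pt] using this
  have hj : ∀ j, s * num ξ q j + t * num ξ q' j = 0 := fun j => by
    have := congrFun hst j.succ
    simpa [pt] using this
  have h0r : (s : ℝ) * q + t * q' = 0 := by exact_mod_cast h0
  have hjr : ∀ j, (s : ℝ) * num ξ q j + t * num ξ q' j = 0 := fun j => by exact_mod_cast hj j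
  have hq1 : (1 : ℝ) ≤ q := by exact_mod_cast hq
  have hqr : (q : ℝ) < q' := by exact_mod_cast hqq
  have hv : (s : ℝ) • (fun j => (q : ℝ) * ξ j - num ξ q j)
      = (-t : ℝ) • (fun j => (q' : ℝ) * ξ j - num ξ q' j) := by
    ext j
    simp only [Pi.smul_apply, smul_eq_mul]
    linear_combination (ξ j) * h0r - hjr j
  have hn := congrArg norm hv
  rw [norm_smul, norm_smul, norm_neg, Real.norm_eq_abs, Real.norm_eq_abs] at hn
  change |(s : ℝ)| * er ξ q = |(t : ℝ)| * er ξ q' at hn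
  have h1 : |(s : ℝ)| * q = |(t : ℝ)| * q' := by
    have : (s : ℝ) * q = - (t * q') := by linarith
    have := congrArg abs this
    rwa [abs_neg, abs_mul, abs_mul, Nat.abs_cast, Nat.abs_cast] at this
  have hs : |(s : ℝ)| = 0 := by
    by_contra hne
    have hsp : 0 < |(s : ℝ)| := lt_of_le_of_ne (abs_nonneg _) (Ne.symm hne)
    have htp : 0 ≤ |(t : ℝ)| := abs_nonneg _
    have hlt : |(t : ℝ)| < |(s : ℝ)| := by
      by_contra hc
      nlinarith
    have := er_nonneg ξ q'
    nlinarith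
  have ht : |(t : ℝ)| = 0 := by
    rw [hs, zero_mul] at h1
    rcases mul_eq_zero.1 h1.symm with h | h
    · exact h
    · linarith
  constructor
  · exact_mod_cast abs_eq_zero.1 hs
  · exact_mod_cast abs_eq_zero.1 ht

lemma sup_ln (q q' : ℕ) : ln ξ q ⊔ ln ξ q' =
    Submodule.span ℚ (Set.range fun i => toQ _ (![pt ξ q, pt ξ q'] i)) := by
  unfold ln
  rw [← Submodule.span_union]
  congr 1
  ext z
  simp [eq_comm, or_comm]

lemma finrank_sup {q q' : ℕ} (h : LinearIndependent ℤ ![pt ξ q, pt ξ q']) :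
    Module.finrank ℚ ↥(ln ξ q ⊔ ln ξ q') = 2 := by
  rw [sup_ln]
  have := linearIndependent_iff_card_eq_finrank_span.1 (linInd_Q.1 h)
  rw [Set.finrank] at this
  rw [← this]; simp

lemma D_sup_le {q q' : ℕ} (hq : 1 ≤ q) (hqq : q < q') (her : er ξ q' < er ξ q) :
    (D (ln ξ q ⊔ ln ξ q') : ℝ) ≤ (4 * d * KK ξ) * (er ξ q * q') ^ 2 := by
  have hind := indep_pair ξ hq hqq her
  have h1 : D (ln ξ q ⊔ ln ξ q') ≤ gdet ![pt ξ q, pt ξ q'] := by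
    apply D_le_gdet _ _ _ hind
    · rw [finrank_sup ξ hind]; simp
    · intro i
      rw [sup_ln]
      exact Submodule.subset_span ⟨i, rfl⟩
  have hq1 : (1 : ℝ) ≤ q := by exact_mod_cast hq
  have hqr : (q : ℝ) < q' := by exact_mod_cast hqq
  have h1r : (D (ln ξ q ⊔ ln ξ q') : ℝ) ≤ (gdet ![pt ξ q, pt ξ q'] : ℝ) := by exact_mod_cast h1
  rw [gdet_two] at h1r
  set t : ℝ := (q : ℝ) / q' with ht
  have ht0 : 0 ≤ t := by positivity
  have ht1 : t ≤ 1 := by rw [ht, div_le_one (by linarith)]; exact hqr.le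
  set X : ℝ := ((pt ξ q ⬝ᵥ pt ξ q : ℤ) : ℝ) with hX
  set Y : ℝ := ((pt ξ q' ⬝ᵥ pt ξ q' : ℤ) : ℝ) with hY
  set Z : ℝ := ((pt ξ q ⬝ᵥ pt ξ q' : ℤ) : ℝ) with hZ
  have hexp : X - 2 * t * Z + t ^ 2 * Y = ∑ j, ((num ξ q j : ℝ) - t * num ξ q' j) ^ 2 := by
    have e : X - 2 * t * Z + t ^ 2 * Y = ∑ i, ((pt ξ q i : ℝ) - t * pt ξ q' i) ^ 2 := by
      simp only [hX, hY, hZ, dotProduct]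
      push_cast
      rw [Finset.mul_sum, Finset.mul_sum, ← Finset.sum_sub_distrib, ← Finset.sum_add_distrib]
      apply Finset.sum_congr rfl
      intro i _
      ring
    rw [e, Fin.sum_univ_succ]
    have : (t : ℝ) * q' = q := by rw [ht]; exact div_mul_cancel₀ _ (by linarith)
    simp [pt, this]
  have hbd : ∑ j, ((num ξ q j : ℝ) - t * num ξ q' j) ^ 2 ≤ d * (2 * er ξ q) ^ 2 := by
    calc ∑ j, ((num ξ q j : ℝ) - t * num ξ q' j) ^ 2 ≤ ∑ j : Fin d, (2 * er ξ q) ^ 2 := by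
          apply Finset.sum_le_sum
          intro j _
          have tq : (t : ℝ) * q' = q := by rw [ht]; exact div_mul_cancel₀ _ (by linarith)
          have e : (num ξ q j : ℝ) - t * num ξ q' j =
            t * ((q' : ℝ) * ξ j - num ξ q' j) - ((q : ℝ) * ξ j - num ξ q j) := by
            rw [← tq]; ring
          rw [e, sq_le_sq]
          have a1 := le_er ξ q j
          have a2 := (le_er ξ q' j).trans her.le
          have a3 := er_nonneg ξ q
          calc _ ≤ |t * ((q' : ℝ) * ξ j - num ξ q' j)| + |(q : ℝ) * ξ j - num ξ q j| := abs_sub _ _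
            _ ≤ 1 * er ξ q + er ξ q := by
              rw [abs_mul, abs_of_nonneg ht0]
              gcongr
            _ = 2 * er ξ q := by ring
            _ ≤ |2 * er ξ q| := le_abs_self _
      _ = d * (2 * er ξ q) ^ 2 := by simp
  have hY0 : 0 ≤ Y := (sq_nonneg _).trans (le_dot ξ q')
  have hYK : Y ≤ KK ξ * (q' : ℝ) ^ 2 := dot_le ξ (by omega)
  have hmain : X * Y - Z * Z ≤ (X - 2 * t * Z + t ^ 2 * Y) * Y := by
    nlinarith [sq_nonneg (Z - t * Y)]
  calc (D (ln ξ q ⊔ ln ξ q') : ℝ) ≤ X * Y - Z * Z := by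
        refine h1r.trans (le_of_eq ?_)
        push_cast [hX, hY, hZ]; ring
    _ ≤ (d * (2 * er ξ q) ^ 2) * Y := hmain.trans (mul_le_mul_of_nonneg_right (hexp ▸ hbd) hY0)
    _ ≤ (d * (2 * er ξ q) ^ 2) * (KK ξ * (q' : ℝ) ^ 2) := by gcongr
    _ = _ := by ring

lemma tail_ln {ξ : Fin d → ℝ} (hirr : TotallyIrrational ξ) {qs : ℕ → ℕ} (hmono : StrictMono qs)
    (W : Submodule ℚ (Fin (d + 1) → ℚ)) (hW : W ≠ ⊤) (j0 : ℕ) :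
    ∃ j, j0 ≤ j ∧ ¬ ln ξ (qs j) ≤ W := by
  by_contra hcon
  push Not at hcon
  obtain ⟨f, hf, hker⟩ := Submodule.exists_le_ker_of_lt_top W (lt_top_iff_ne_top.2 hW)
  set c : Fin (d + 1) → ℚ := fun i => f (Pi.single i 1) with hc
  have hfx : ∀ v, f v = ∑ i, v i * c i := by
    intro v
    conv_lhs => rw [pi_eq_sum_univ' v]
    simp [map_sum, hc, Pi.single]
  have hz : ∀ j, j0 ≤ j → (qs j : ℝ) * c 0 + ∑ i : Fin d, (num ξ (qs j) i : ℝ) * c i.succ = 0 := by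
    intro j hj
    have h1 : f (toQ _ (pt ξ (qs j))) = 0 :=
      hker (hcon j hj (Submodule.mem_span_singleton_self _))
    rw [hfx, Fin.sum_univ_succ] at h1
    simp only [toQ_apply, pt, Fin.cons_zero, Fin.cons_succ] at h1
    exact_mod_cast h1
  set lam : ℝ := c 0 + ∑ i : Fin d, (c i.succ : ℝ) * ξ i with hlam
  have hb : ∀ j, j0 ≤ j → (qs j : ℝ) * |lam| ≤ ∑ i : Fin d, |(c i.succ : ℝ)| := by
    intro j hj
    have e : (qs j : ℝ) * lam
        = ∑ i : Fin d, (c i.succ : ℝ) * ((qs j : ℝ) * ξ i - num ξ (qs j) i) := by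
      have := hz j hj
      simp only [mul_sub, Finset.sum_sub_distrib]
      rw [hlam, mul_add, Finset.mul_sum]
      have e1 : ∑ i : Fin d, (num ξ (qs j) i : ℝ) * c i.succ
        = ∑ i : Fin d, (c i.succ : ℝ) * num ξ (qs j) i :=
        Finset.sum_congr rfl fun i _ => mul_comm _ _
      have e2 : ∑ i : Fin d, (qs j : ℝ) * ((c i.succ : ℝ) * ξ i)
        = ∑ i : Fin d, (c i.succ : ℝ) * ((qs j : ℝ) * ξ i) :=
        Finset.sum_congr rfl fun i _ => by ring
      rw [e2]
      linarith
    have h2 : (qs j : ℝ) * |lam| = |(qs j : ℝ) * lam| := by rw [abs_mul, Nat.abs_cast]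
    rw [h2, e]
    refine (Finset.abs_sum_le_sum_abs _ _).trans (Finset.sum_le_sum fun i _ => ?_)
    rw [abs_mul]
    exact mul_le_of_le_one_right (abs_nonneg _) ((le_er ξ _ i).trans (er_le_half ξ _))
  have hl0 : lam = 0 := by
    by_contra hne
    have hp : 0 < |lam| := abs_pos.2 hne
    obtain ⟨n, hn⟩ := exists_nat_gt ((∑ i : Fin d, |(c i.succ : ℝ)|) / |lam|)
    have h1 := hb (max j0 n) (le_max_left _ _)
    rw [div_lt_iff₀ hp] at hn
    have h2 : (n : ℝ) ≤ qs (max j0 n) := by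
      exact_mod_cast (le_max_right j0 n).trans (hmono.id_le _)
    have := mul_le_mul_of_nonneg_right h2 hp.le
    linarith
  obtain ⟨c0, cj⟩ := lin_form_ne hirr (c 0) (fun i => c i.succ) hl0
  apply hf
  ext i
  simp only [LinearMap.coe_comp, Function.comp_apply, LinearMap.coe_single, LinearMap.zero_comp,
    LinearMap.zero_apply]
  refine Fin.cases ?_ ?_ i
  · exact c0
  · exact cj

end points
end UE

namespace UE
section poly
variable {d : ℕ}

lemma exists_denom (f : MvPolynomial (Fin d) ℚ) {s : ℕ} (hdeg : f.totalDegree ≤ s) :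
    ∃ M : ℕ, 1 ≤ M ∧ ∀ (q : ℕ) (a : Fin d → ℤ), 1 ≤ q →
      ∃ z : ℤ, (M : ℚ) * (q : ℚ) ^ s * MvPolynomial.eval (fun j => (a j : ℚ) / q) f = z := by
  classical
  refine ⟨∏ m ∈ f.support, (f.coeff m).den, ?_, ?_⟩
  · exact Nat.one_le_iff_ne_zero.2 (Finset.prod_ne_zero_iff.2 fun m _ => (f.coeff m).den_nz)
  · intro q a hq
    have hq0 : (q : ℚ) ≠ 0 := by exact_mod_cast (by omega : q ≠ 0)
    suffices h : ((∏ m ∈ f.support, (f.coeff m).den : ℕ) : ℚ) * (q : ℚ) ^ s *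
        MvPolynomial.eval (fun j => (a j : ℚ) / q) f ∈ (Int.castRingHom ℚ).range by
      obtain ⟨z, hz⟩ := h
      exact ⟨z, hz.symm⟩
    have hI : ∀ z : ℤ, (z : ℚ) ∈ (Int.castRingHom ℚ).range := fun z => ⟨z, rfl⟩
    have hN : ∀ z : ℕ, (z : ℚ) ∈ (Int.castRingHom ℚ).range := fun z => ⟨z, by simp⟩
    rw [MvPolynomial.eval_eq', Finset.mul_sum]
    apply sum_mem
    intro m hm
    have hle : ∑ i, m i ≤ s := by
      have := (MvPolynomial.le_totalDegree hm).trans hdeg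
      rwa [Finsupp.sum_fintype _ _ (fun _ => rfl)] at this
    have e1 : (q : ℚ) ^ s * ∏ i, ((a i : ℚ) / q) ^ m i
        = (q : ℚ) ^ (s - ∑ i, m i) * ∏ i, (a i : ℚ) ^ m i := by
      simp only [div_pow, Finset.prod_div_distrib]
      rw [Finset.prod_pow_eq_pow_sum]
      have : (q : ℚ) ^ s = (q : ℚ) ^ (s - ∑ i, m i) * (q : ℚ) ^ (∑ i, m i) := by
        rw [← pow_add, Nat.sub_add_cancel hle]
      rw [this]
      field_simp
    have e2 : ((∏ m ∈ f.support, (f.coeff m).den : ℕ) : ℚ) * f.coeff m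
        ∈ (Int.castRingHom ℚ).range := by
      rw [← Finset.mul_prod_erase _ _ hm]
      push_cast
      have : ((f.coeff m).den : ℚ) * (∏ x ∈ f.support.erase m, ((f.coeff x).den : ℚ)) * f.coeff m
        = (f.coeff m).num * (∏ x ∈ f.support.erase m, ((f.coeff x).den : ℚ)) := by
        have := Rat.mul_den_eq_num (f.coeff m)
        rw [← this]; ring
      rw [this]
      exact mul_mem (hI _) (prod_mem fun x _ => hN _)
    have e3 : ((∏ m ∈ f.support, (f.coeff m).den : ℕ) : ℚ) * (q : ℚ) ^ s *
        (f.coeff m * ∏ i, ((a i : ℚ) / q) ^ m i)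
      = (((∏ m ∈ f.support, (f.coeff m).den : ℕ) : ℚ) * f.coeff m) *
        ((q : ℚ) ^ (s - ∑ i, m i) * ∏ i, (a i : ℚ) ^ m i) := by
      rw [← e1]; ring
    rw [e3]
    exact mul_mem e2 (mul_mem (pow_mem (hN _) _) (prod_mem fun i _ => pow_mem (hI _) _))

lemma poly_diff (f : MvPolynomial (Fin d) ℚ) (ξ : Fin d → ℝ) :
    DifferentiableAt ℝ (fun y : Fin d → ℝ => MvPolynomial.aeval y f) ξ := by
  simp only [MvPolynomial.aeval_def, MvPolynomial.eval₂_eq']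
  fun_prop

lemma poly_lip (f : MvPolynomial (Fin d) ℚ) (ξ : Fin d → ℝ) :
    ∃ K : ℝ, 0 < K ∧ ∀ᶠ y in nhds ξ,
      |MvPolynomial.aeval y f - MvPolynomial.aeval ξ f| ≤ K * ‖y - ξ‖ := by
  obtain ⟨K, hK, h⟩ := (poly_diff f ξ).isBigO_sub.exists_pos
  exact ⟨K, hK, h.bound⟩

/-- The rational approximation. -/
noncomputable def ra (ξ : Fin d → ℝ) (q : ℕ) : Fin d → ℚ := fun j => (num ξ q j : ℚ) / q

lemma norm_ra (ξ : Fin d → ℝ) {q : ℕ} (hq : 1 ≤ q) :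
    ‖(fun j => (ra ξ q j : ℝ)) - ξ‖ = er ξ q / q := by
  have hq0 : (0 : ℝ) < q := by exact_mod_cast hq
  have : (fun j => (ra ξ q j : ℝ)) - ξ = (-(1 / q) : ℝ) • (fun j => (q : ℝ) * ξ j - num ξ q j) := by
    ext j
    simp [ra]
    field_simp
    ring
  rw [this, norm_smul, norm_neg, Real.norm_eq_abs, abs_of_pos (by positivity)]
  unfold er
  ring

lemma aeval_ra (f : MvPolynomial (Fin d) ℚ) (x : Fin d → ℚ) :
    MvPolynomial.aeval (fun j => (x j : ℝ)) f = ((MvPolynomial.eval x f : ℚ) : ℝ) := by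
  have := MvPolynomial.aeval_algebraMap_apply (B := ℝ) x f
  rw [MvPolynomial.aeval_eq_eval] at this
  exact this

lemma er_lower (f : MvPolynomial (Fin d) ℚ) {s : ℕ} (hs : 1 ≤ s) (hdeg : f.totalDegree ≤ s)
    (hfin : {x : Fin d → ℚ | MvPolynomial.eval x f = 1}.Finite)
    {ξ : Fin d → ℝ} (hsurf : MvPolynomial.aeval ξ f = 1) {qs : ℕ → ℕ} (B : Best ξ qs) :
    ∃ c : ℝ, 0 < c ∧ ∀ᶠ n in atTop, c ≤ er ξ (qs n) * (qs n : ℝ) ^ (s - 1) := by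
  obtain ⟨M, hM, hz⟩ := exists_denom f hdeg
  obtain ⟨K, hK, hlip⟩ := poly_lip f ξ
  have hMr : (0 : ℝ) < M := by exact_mod_cast hM
  have hqp : ∀ n, (0 : ℝ) < qs n := fun n => by exact_mod_cast B.one_le n
  have hanti : StrictAnti fun n => er ξ (qs n) / (qs n : ℝ) := by
    apply strictAnti_nat_of_succ_lt
    intro n
    have h1 : (qs n : ℝ) ≤ qs (n + 1) := by exact_mod_cast (B.strictMono (Nat.lt_succ_self n)).le
    have h2 := B.er_lt n
    calc _ ≤ er ξ (qs (n + 1)) / (qs n : ℝ) :=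
          div_le_div_of_nonneg_left (er_nonneg _ _) (hqp n) h1
      _ < _ := div_lt_div_of_pos_right h2 (hqp n)
  have hinj : Function.Injective fun n => ra ξ (qs n) := by
    intro m n hmn
    apply hanti.injective
    have hmn : ra ξ (qs m) = ra ξ (qs n) := hmn
    simp only [← norm_ra ξ (B.one_le _), hmn]
  have hev : ∀ᶠ n in atTop, MvPolynomial.eval (ra ξ (qs n)) f ≠ 1 := by
    have := hfin.preimage hinj.injOn
    rw [← Nat.cofinite_eq_atTop]
    exact this.compl_mem_cofinite
  have hqt : Tendsto (fun n => (qs n : ℝ)) atTop atTop :=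
    tendsto_natCast_atTop_atTop.comp B.strictMono.tendsto_atTop
  have htend : Tendsto (fun n => (fun j => (ra ξ (qs n) j : ℝ))) atTop (nhds ξ) := by
    rw [tendsto_iff_norm_sub_tendsto_zero]
    have h0 : Tendsto (fun n => (1 : ℝ) / (qs n : ℝ)) atTop (nhds 0) :=
      tendsto_const_nhds.div_atTop hqt
    refine squeeze_zero (fun n => norm_nonneg _) (fun n => ?_) h0
    rw [norm_ra ξ (B.one_le n)]
    exact div_le_div_of_nonneg_right (er_le_half ξ _) (hqp n).le
  refine ⟨1 / (K * M), by positivity, ?_⟩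
  filter_upwards [hev, htend.eventually hlip] with n h1 h2
  rw [norm_ra ξ (B.one_le n), hsurf, aeval_ra] at h2
  obtain ⟨z, hz⟩ := hz (qs n) (num ξ (qs n)) (B.one_le n)
  have hz : (M : ℚ) * (qs n : ℚ) ^ s * MvPolynomial.eval (ra ξ (qs n)) f = z := hz
  set v := MvPolynomial.eval (ra ξ (qs n)) f with hv
  have hzr : (M : ℝ) * (qs n : ℝ) ^ s * (v : ℝ) = z := by exact_mod_cast hz
  have hw : (M : ℝ) * (qs n : ℝ) ^ s * ((v : ℝ) - 1) = ((z - M * (qs n) ^ s : ℤ) : ℝ) := by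
    push_cast; linarith
  have hne : (z - M * (qs n) ^ s : ℤ) ≠ 0 := by
    intro h0
    rw [h0] at hw
    simp only [Int.cast_zero, mul_eq_zero, pow_eq_zero_iff', hMr.ne', (hqp n).ne', false_and,
      false_or] at hw
    exact h1 (by exact_mod_cast sub_eq_zero.1 hw)
  have hge : (1 : ℝ) ≤ (M : ℝ) * (qs n : ℝ) ^ s * |(v : ℝ) - 1| := by
    have : (M : ℝ) * (qs n : ℝ) ^ s * |(v : ℝ) - 1| = |(M : ℝ) * (qs n : ℝ) ^ s * ((v : ℝ) - 1)| := by
      rw [abs_mul, abs_of_pos (mul_pos hMr (pow_pos (hqp n) s))]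
    rw [this, hw]
    exact_mod_cast Int.one_le_abs hne
  have hps : (qs n : ℝ) ^ s = (qs n : ℝ) ^ (s - 1) * qs n := by
    rw [← pow_succ, Nat.sub_add_cancel hs]
  rw [div_le_iff₀ (by positivity)]
  calc (1 : ℝ) ≤ _ := hge
    _ ≤ (M : ℝ) * (qs n : ℝ) ^ s * (K * (er ξ (qs n) / qs n)) :=
        mul_le_mul_of_nonneg_left h2 (by have := hqp n; positivity)
    _ = _ := by
      rw [hps]
      have := (hqp n).ne'
      field_simp
end poly
end UE

namespace UE
section final
variable {d : ℕ}

lemma log_le_ht (ξ : Fin d → ℝ) {q : ℕ} (hq : 1 ≤ q)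
    (hinv : ∀ q', 1 ≤ q' → q' < q → er ξ q < er ξ q') : Real.log q ≤ ht (ln ξ q) := by
  have hq0 : (0 : ℝ) < q := by exact_mod_cast hq
  have h := Real.log_le_log (by positivity) (le_dot ξ q)
  rw [Real.log_pow] at h
  unfold ht
  rw [D_ln ξ hq hinv]
  push_cast at h ⊢
  linarith

lemma ht_le_log (ξ : Fin d → ℝ) {q : ℕ} (hq : 1 ≤ q)
    (hinv : ∀ q', 1 ≤ q' → q' < q → er ξ q < er ξ q') :
    ht (ln ξ q) ≤ Real.log q + Real.log (KK ξ) / 2 := by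
  have hq0 : (0 : ℝ) < q := by exact_mod_cast hq
  have hK : 0 < KK ξ := by linarith [KK_pos ξ]
  have h := Real.log_le_log (lt_of_lt_of_le (by positivity) (le_dot ξ q)) (dot_le ξ hq)
  rw [Real.log_mul hK.ne' (by positivity), Real.log_pow] at h
  unfold ht
  rw [D_ln ξ hq hinv]
  push_cast at h ⊢
  linarith

lemma ht_sup_le (ξ : Fin d → ℝ) (hd : 0 < d) {q q' : ℕ} (hq : 1 ≤ q) (hqq : q < q')
    (her : er ξ q' < er ξ q) :
    ht (ln ξ q ⊔ ln ξ q') ≤ Real.log (4 * d * KK ξ) / 2 + Real.log (er ξ q) + Real.log q' := by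
  have hq0 : (0 : ℝ) < q' := by exact_mod_cast (by omega : 0 < q')
  have hK : 0 < KK ξ := by linarith [KK_pos ξ]
  have he : 0 < er ξ q := (er_nonneg ξ q').trans_lt her
  have hd0 : (0 : ℝ) < d := by exact_mod_cast hd
  have hD : (0 : ℝ) < D (ln ξ q ⊔ ln ξ q') := by
    exact_mod_cast lt_of_lt_of_le one_pos (D_pos (ln ξ q ⊔ ln ξ q'))
  have h := Real.log_le_log hD (D_sup_le ξ hq hqq her)
  rw [Real.log_mul (by positivity) (by positivity), Real.log_pow,
    Real.log_mul he.ne' hq0.ne'] at h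
  unfold ht
  push_cast at h ⊢
  linarith

lemma unif_mono {ξ : Fin d → ℝ} {γ γ1 : ℝ} (h : UnifApprox ξ γ) (hle : γ1 ≤ γ) :
    UnifApprox ξ γ1 := by
  unfold UnifApprox at *
  filter_upwards [h, eventually_ge_atTop 1] with Q ⟨q, a, h1, h2, h3⟩ hQ
  exact ⟨q, a, h1, h2, fun j => (h3 j).trans_le
    (Real.rpow_le_rpow_of_exponent_le hQ (by linarith))⟩

lemma unif_er {ξ : Fin d → ℝ} {γ : ℝ} (h : UnifApprox ξ γ) :
    ∀ᶠ Q : ℝ in atTop, ∃ q : ℕ, 1 ≤ q ∧ (q : ℝ) ≤ Q ∧ er ξ q ≤ Q ^ (-γ) := by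
  filter_upwards [h, eventually_ge_atTop 1] with Q ⟨q, a, h1, h2, h3⟩ hQ
  obtain ⟨n, rfl⟩ := Int.eq_ofNat_of_zero_le (by omega : 0 ≤ q)
  refine ⟨n, by omega, by exact_mod_cast h2, ?_⟩
  apply er_le ξ (by positivity) a
  intro j
  have := (h3 j).le
  exact_mod_cast this

lemma unif_small {ξ : Fin d → ℝ} {γ : ℝ} (hγ : 0 < γ) (h : UnifApprox ξ γ) (t : ℝ) (ht : 0 < t) :
    ∃ q, 1 ≤ q ∧ er ξ q < t := by
  have h1 := (tendsto_rpow_neg_atTop hγ).eventually (gt_mem_nhds ht)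
  obtain ⟨Q, ⟨q, hq, _, hq2⟩, hQ⟩ := ((unif_er h).and h1).exists
  exact ⟨q, hq, hq2.trans_lt hQ⟩

lemma best_upper {ξ : Fin d → ℝ} {γ : ℝ} (h : UnifApprox ξ γ) {qs : ℕ → ℕ}
    (hpos : ∀ q, 1 ≤ q → 0 < er ξ q) (B : Best ξ qs) :
    ∀ᶠ n in atTop, Real.log (er ξ (qs n)) ≤ γ * Real.log 2 - γ * Real.log (qs (n + 1)) := by
  have hqt : Tendsto (fun n => (qs (n + 1) : ℝ) / 2) atTop atTop :=
    (tendsto_natCast_atTop_atTop.comp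
      (B.strictMono.tendsto_atTop.comp (tendsto_add_atTop_nat 1))).atTop_div_const two_pos
  filter_upwards [hqt.eventually (unif_er h)] with n ⟨q, hq, hqQ, hqe⟩
  have hp : (0 : ℝ) < qs (n + 1) := by exact_mod_cast B.one_le (n + 1)
  have hlt : q < qs (n + 1) := by
    have : (q : ℝ) < qs (n + 1) := by linarith
    exact_mod_cast this
  have h1 := (B.le_of_lt n q hq hlt).trans hqe
  have h2 := Real.log_le_log (hpos _ (B.one_le n)) h1
  rw [Real.log_rpow (by positivity), Real.log_div hp.ne' two_ne_zero] at h2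
  linarith

lemma key {ξ : Fin d → ℝ} (hd : 0 < d) (hirr : TotallyIrrational ξ) {s : ℕ} (hs : 2 ≤ s)
    (f : MvPolynomial (Fin d) ℚ) (hdeg : f.totalDegree ≤ s)
    (hfin : {x : Fin d → ℚ | MvPolynomial.eval x f = 1}.Finite)
    (hsurf : MvPolynomial.aeval ξ f = 1) {γ g : ℝ} (hg : 0 < g) (hgγ : g < γ) (hγ1 : γ < 1)
    (h : UnifApprox ξ γ) : 0 ≤ cc g (((s : ℝ) - 1) / g) d := by
  have hγ : 0 < γ := hg.trans hgγ
  have hpos : ∀ q, 1 ≤ q → 0 < er ξ q := fun q hq => er_pos hd hirr hq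
  obtain ⟨qs, B⟩ := exists_best ξ hpos (unif_small hγ h)
  obtain ⟨c, hc, hlow⟩ := er_lower f (by omega) hdeg hfin hsurf B
  have hs1 : (1 : ℝ) ≤ (s : ℝ) - 1 := by
    have : (2 : ℝ) ≤ s := by exact_mod_cast hs
    linarith
  set G : ℝ := ((s : ℝ) - 1) / g with hGdef
  have hG : 0 < G := by positivity
  have hGg : G * g = (s : ℝ) - 1 := by rw [hGdef]; exact div_mul_cancel₀ _ hg.ne'
  have hlt : Tendsto (fun n => Real.log (qs n)) atTop atTop :=
    Real.tendsto_log_atTop.comp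
      (tendsto_natCast_atTop_atTop.comp B.strictMono.tendsto_atTop)
  have hlt1 : Tendsto (fun n => Real.log (qs (n + 1))) atTop atTop :=
    hlt.comp (tendsto_add_atTop_nat 1)
  set C1 : ℝ := Real.log (4 * d * KK ξ) / 2 with hC1
  set C2 : ℝ := Real.log (KK ξ) / 2 with hC2
  set U : ℝ := γ * Real.log 2 with hU
  have hev : ∀ᶠ n in atTop,
      ht (ln ξ (qs n) ⊔ ln ξ (qs (n + 1))) ≤ (1 - g) * ht (ln ξ (qs (n + 1))) ∧
      ht (ln ξ (qs (n + 1))) ≤ G * ht (ln ξ (qs n)) ∧ 0 < ht (ln ξ (qs n)) := by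
    filter_upwards [best_upper h hpos B, hlow, hlt.eventually_gt_atTop 0,
      hlt1.eventually_ge_atTop ((C1 + U) / (γ - g)),
      hlt1.eventually_ge_atTop ((U - Real.log c + g * C2) / (γ - g))] with n h1 h2 h3 h4 h5
    have hq1 := B.one_le n
    have hq2 := B.one_le (n + 1)
    have hqp : (0 : ℝ) < qs n := by exact_mod_cast hq1
    have a1 := log_le_ht ξ hq1 (B.inv n)
    have a2 := log_le_ht ξ hq2 (B.inv (n + 1))
    have a3 := ht_le_log ξ hq2 (B.inv (n + 1))
    have a4 := ht_sup_le ξ hd hq1 (B.strictMono (Nat.lt_succ_self n)) (B.er_lt n)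
    rw [div_le_iff₀ (by linarith)] at h4 h5
    have a5 := Real.log_le_log hc h2
    rw [Real.log_mul (hpos _ hq1).ne' (by positivity), Real.log_pow, Nat.cast_sub (by omega),
      Nat.cast_one] at a5
    refine ⟨?_, ?_, by linarith⟩
    · have : (1 - g) * Real.log (qs (n + 1)) ≤ (1 - g) * ht (ln ξ (qs (n + 1))) :=
        mul_le_mul_of_nonneg_left a2 (by linarith)
      have a4 : ht (ln ξ (qs n) ⊔ ln ξ (qs (n + 1))) ≤ C1 + Real.log (er ξ (qs n))
        + Real.log (qs (n + 1)) := a4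
      nlinarith
    · have b1 : G * Real.log (qs n) ≤ G * ht (ln ξ (qs n)) := mul_le_mul_of_nonneg_left a1 hG.le
      refine le_trans ?_ b1
      have b2 : g * ht (ln ξ (qs (n + 1))) ≤ g * (Real.log (qs (n + 1)) + C2) :=
        mul_le_mul_of_nonneg_left a3 hg.le
      have b3 : g * ht (ln ξ (qs (n + 1))) ≤ g * (G * Real.log (qs n)) := by
        have : g * (G * Real.log (qs n)) = ((s : ℝ) - 1) * Real.log (qs n) := by
          rw [← hGg]; ring
        rw [this]
        nlinarith
      exact le_of_mul_le_mul_left b3 hg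
  obtain ⟨n0, hn0⟩ := eventually_atTop.1 hev
  have L : Lev ht G 1 (1 - g) (fun n => ln ξ (qs (n + n0))) := by
    refine ⟨fun j => finrank_ln ξ (B.one_le _), fun j => ?_, fun W hW j0 => ?_, fun j => ?_,
      fun j => ?_, fun j => (hn0 (j + n0) (by omega)).2.2⟩
    · exact finrank_sup ξ (indep_pair ξ (B.one_le _) (B.strictMono (by omega)) (by
        rw [show j + 1 + n0 = j + n0 + 1 by omega]; exact B.er_lt _))
    · exact tail_ln hirr (qs := fun n => qs (n + n0))
        (fun a b hab => B.strictMono (by omega)) W hW j0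
    · have := (hn0 (j + n0) (by omega)).1
      rw [show j + n0 + 1 = j + 1 + n0 by omega] at this
      exact this
    · have h1 := (hn0 (j + n0) (by omega)).1
      have h2 := (hn0 (j + n0) (by omega)).2.1
      rw [show j + n0 + 1 = j + 1 + n0 by omega] at h1 h2
      refine h1.trans ?_
      rw [mul_assoc]
      exact mul_le_mul_of_nonneg_left h2 (by linarith)
  exact comb_main ht_nonneg ht_submod hG hg (by omega) (by simp) L

end final
end UE

/-- Theorem 2b(ii): if `f` is an arbitrary polynomial of degree `s ≥ 2` in `d ≥ 2`
variables with rational coefficients such that `{x ∈ ℚ^d : f(x) = 1}` is finite, and `ξ`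
is totally irrational with `f(ξ) = 1`, then `ω̂(ξ) ≤ H_{d-1,s}`, where `H_{d-1,s}` is
the unique positive root of `1 - x = x · Σ_{k=1}^{d-1} (x/(s-1))^k`. -/
theorem uniform_exponent_le_of_on_hypersurface
    (d s : ℕ) (hd : 2 ≤ d) (hs : 2 ≤ s)
    (f : MvPolynomial (Fin d) ℚ) (hdeg : f.totalDegree = s)
    (hfin : {x : Fin d → ℚ | MvPolynomial.eval x f = 1}.Finite)
    (ξ : Fin d → ℝ)
    (hirr : TotallyIrrational ξ)
    (hsurf : MvPolynomial.aeval ξ f = 1)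
    (H : ℝ) (hHpos : 0 < H)
    (hHroot : 1 - H = H * ∑ k ∈ Finset.range (d - 1), (H / ((s : ℝ) - 1)) ^ (k + 1)) :
    ∀ γ : ℝ, UnifApprox ξ γ → γ ≤ H := by
  intro γ hU
  by_contra hcon
  push Not at hcon
  have hs1 : (0 : ℝ) < (s : ℝ) - 1 := by
    have : (2 : ℝ) ≤ s := by exact_mod_cast hs
    linarith
  have hH1 : H < 1 := by
    have : 0 < ∑ k ∈ Finset.range (d - 1), (H / ((s : ℝ) - 1)) ^ (k + 1) :=
      Finset.sum_pos (fun k _ => by positivity) ⟨0, by simp; omega⟩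
    have := mul_pos hHpos this
    linarith
  obtain ⟨γ1, h1, h2⟩ := exists_between (lt_min hcon hH1)
  have h3 := lt_min_iff.1 h2
  obtain ⟨g, hg1, hg2⟩ := exists_between h1
  have hg : 0 < g := hHpos.trans hg1
  have hk := UE.key (by omega) hirr hs f hdeg.le hfin hsurf hg hg2 h3.2
    (UE.unif_mono hU h3.1.le)
  unfold UE.cc at hk
  rw [one_div_div, show d = (d - 1) + 1 by omega, Finset.sum_range_succ'] at hk
  simp only [pow_zero] at hk
  have hle : ∑ k ∈ Finset.range (d - 1), (H / ((s : ℝ) - 1)) ^ (k + 1)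
      ≤ ∑ k ∈ Finset.range (d - 1), (g / ((s : ℝ) - 1)) ^ (k + 1) := by
    apply Finset.sum_le_sum
    intro k _
    gcongr
  have hnn : 0 ≤ ∑ k ∈ Finset.range (d - 1), (H / ((s : ℝ) - 1)) ^ (k + 1) :=
    Finset.sum_nonneg fun k _ => by positivity
  have := mul_le_mul hg1.le hle hnn hg.le
  linarith
end

section
/- Let s ≥ 2 and d ≥ 1 be integers. Then the equation 1 − x = x · Σ_{k=1}^{d} (x/(s−1))^k has a unique positive real root H_{d,s}; moreover (s−1)/s < H_{d,s} < 1, for fixed s the sequence d ↦ H_{d,s} is strictly decreasing, and H_{d,s} → (s−1)/s as d → ∞. -/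
/-- The right-hand side of the equation is monotone on the nonnegative reals. -/
lemma rhs_mono (a : ℝ) (ha : 0 < a) (d : ℕ) {x y : ℝ} (hx : 0 ≤ x) (hxy : x ≤ y) :
    x * ∑ k ∈ Finset.range d, (x / a) ^ (k + 1) ≤ y * ∑ k ∈ Finset.range d, (y / a) ^ (k + 1) := by
  have hy : 0 ≤ y := hx.trans hxy
  have h0 : 0 ≤ x / a := by positivity
  have h1 : x / a ≤ y / a := by gcongr
  apply mul_le_mul hxy _ (Finset.sum_nonneg fun k _ => by positivity) hy
  exact Finset.sum_le_sum fun k _ => pow_le_pow_left₀ h0 h1 _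

/-- Value of the right-hand side at the limit point. -/
lemma rhs_at (a : ℝ) (ha : 0 < a) (d : ℕ) :
    a / (a + 1) * ∑ k ∈ Finset.range d, (a / (a + 1) / a) ^ (k + 1)
      = 1 - a / (a + 1) - (1 / (a + 1)) ^ (d + 1) := by
  have h : a / (a + 1) / a = 1 / (a + 1) := by field_simp
  rw [h]
  induction d with
  | zero => simp; field_simp; ring
  | succ n ih =>
    rw [Finset.sum_range_succ, mul_add, ih, pow_succ (1 / (a + 1)) (n + 1)]
    have : a / (a + 1) = 1 - 1 / (a + 1) := by field_simp; ring
    rw [this]; ring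

/-- Properties of `H_{d,s}`: for integers `s ≥ 2` and `d ≥ 1`, the equation
`1 - x = x · Σ_{k=1}^{d} (x/(s-1))^k` has a unique positive real root `H_{d,s}`;
moreover `(s-1)/s < H_{d,s} < 1`, the sequence `d ↦ H_{d,s}` is strictly decreasing,
and `H_{d,s} → (s-1)/s` as `d → ∞`. -/
theorem H_d_s_properties (s : ℕ) (hs : 2 ≤ s) :
    (∀ d : ℕ, 1 ≤ d → ∃! x : ℝ, 0 < x ∧
      1 - x = x * ∑ k ∈ Finset.range d, (x / ((s : ℝ) - 1)) ^ (k + 1)) ∧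
    (∀ H : ℕ → ℝ,
      (∀ d : ℕ, 1 ≤ d → 0 < H d ∧
        1 - H d = H d * ∑ k ∈ Finset.range d, (H d / ((s : ℝ) - 1)) ^ (k + 1)) →
      (∀ d : ℕ, 1 ≤ d → ((s : ℝ) - 1) / s < H d ∧ H d < 1) ∧
      (∀ d : ℕ, 1 ≤ d → H (d + 1) < H d) ∧
      Filter.Tendsto H Filter.atTop (nhds (((s : ℝ) - 1) / s))) := by
  have hs' : (2 : ℝ) ≤ s := by exact_mod_cast hs
  obtain ⟨a, hsa⟩ : ∃ a : ℝ, a = (s : ℝ) - 1 := ⟨_, rfl⟩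
  have hsa' : (s : ℝ) = a + 1 := by linarith
  have ha : 0 < a := by linarith
  rw [← hsa, hsa']
  clear hsa
  refine ⟨fun d hd => ?_, fun H hH => ?_⟩
  · have hc : ContinuousOn (fun x : ℝ => x + x * ∑ k ∈ Finset.range d, (x / a) ^ (k + 1))
        (Set.Icc 0 1) := by fun_prop
    have hS : 0 ≤ ∑ k ∈ Finset.range d, ((1 : ℝ) / a) ^ (k + 1) :=
      Finset.sum_nonneg fun k _ => by positivity
    have hm : (1 : ℝ) ∈ Set.Icc ((0 : ℝ) + 0 * ∑ k ∈ Finset.range d, ((0 : ℝ) / a) ^ (k + 1))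
        (1 + 1 * ∑ k ∈ Finset.range d, ((1 : ℝ) / a) ^ (k + 1)) := by
      constructor
      · simp
      · linarith
    obtain ⟨x, hx, hxe⟩ := intermediate_value_Icc (zero_le_one' ℝ) hc hm
    simp only at hxe
    refine ⟨x, ⟨?_, by linarith⟩, ?_⟩
    · rcases hx.1.lt_or_eq with h | h
      · exact h
      · rw [← h] at hxe; simp at hxe
    · rintro y ⟨hy, hye⟩
      rcases le_total x y with h | h
      · have := rhs_mono a ha d hx.1 h
        linarith
      · have := rhs_mono a ha d hy.le h
        linarith
  · have hlow : ∀ d : ℕ, 1 ≤ d → a / (a + 1) < H d := by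
      intro d hd
      obtain ⟨h0, he⟩ := hH d hd
      by_contra! h
      have h1 := rhs_mono a ha d h0.le h
      have h2 := rhs_at a ha d
      have h3 : 0 < (1 / (a + 1)) ^ (d + 1) := by positivity
      linarith
    refine ⟨fun d hd => ⟨hlow d hd, ?_⟩, fun d hd => ?_, ?_⟩
    · obtain ⟨h0, he⟩ := hH d hd
      have : 0 < ∑ k ∈ Finset.range d, (H d / a) ^ (k + 1) :=
        Finset.sum_pos (fun k _ => by positivity) ⟨0, by simp; omega⟩
      have := mul_pos h0 this
      linarith
    · obtain ⟨h0, he⟩ := hH d hd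
      obtain ⟨h0', he'⟩ := hH (d + 1) (by omega)
      by_contra! h
      have h1 := rhs_mono a ha d h0.le h
      rw [Finset.sum_range_succ, mul_add] at he'
      have : 0 < H (d + 1) * (H (d + 1) / a) ^ (d + 1) := by positivity
      linarith
    · have hlt : 1 / (a + 1) < 1 := by rw [div_lt_one (by linarith)]; linarith
      have ht : Filter.Tendsto (fun d : ℕ => a / (a + 1) + (1 / (a + 1)) ^ (d + 1))
          Filter.atTop (nhds (a / (a + 1))) := by
        have := (tendsto_pow_atTop_nhds_zero_of_lt_one (by positivity) hlt).comp
          (Filter.tendsto_add_atTop_nat 1)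
        simpa using this.const_add (a / (a + 1))
      refine tendsto_of_tendsto_of_tendsto_of_le_of_le' tendsto_const_nhds ht ?_ ?_
      · filter_upwards [Filter.eventually_ge_atTop 1] with d hd using (hlow d hd).le
      · filter_upwards [Filter.eventually_ge_atTop 1] with d hd
        have h1 := rhs_mono a ha d (by positivity) (hlow d hd).le
        have h2 := rhs_at a ha d
        have he := (hH d hd).2
        linarith
end
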